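/- Let (M, H) be a sufficiently saturated H-structure, let φ(x, z̄, ȳ) be an L-formula, and consider the L_H-formula ψ(x, ȳ) := ∃z̄ ∈ H^{|z̄|} φ(x, z̄, ȳ). Then the set E = {ā ∈ M^{|ȳ|} : ψ(x, ā) is non-algebraic} is L_H-definable. -/

import Mathlib

open FirstOrder

namespace HPaper

universe u v w

variable {M : Type w} (L : FirstOrder.Language.{u, v}) [L.Structure M]


/-- `x` is (model-theoretically) algebraic over the parameter set `A`:
it satisfies a formula with parameters in `A` having finitely many solutions. -/
def acl (A : Set M) : Set M :=
  {x : M | ∃ φ : (L.withConstants A).Formula (Fin 1),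
      {y : M | φ.Realize (fun _ => y)}.Finite ∧ φ.Realize (fun _ => x)}

/-- Two tuples have the same `L`-type over the parameter set `A`. -/
def SameType (A : Set M) {α : Type*} (a b : α → M) : Prop :=
  ∀ φ : (L.withConstants A).Formula α, φ.Realize a ↔ φ.Realize b

/-- The (algebraic-closure) dimension of a finite tuple over a base set: the least
cardinality of a subtuple over which (together with the base) the whole tuple is algebraic. -/
noncomputable def dim {α : Type*} [Fintype α] (a : α → M) (B : Set M) : ℕ :=
  sInf {k : ℕ | ∃ s : Finset α, s.card = k ∧ ∀ i, a i ∈ acl L (B ∪ (a '' ↑s))}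

/-- The tuple `a` is algebraically independent from `C` over `B`. -/
def Indep {α : Type*} [Fintype α] (a : α → M) (B C : Set M) : Prop :=
  dim L a (B ∪ C) = dim L a B

/-- The set `A` is algebraically independent from `C` over `B`. -/
def SetIndep (A B C : Set M) : Prop :=
  ∀ (n : ℕ) (a : Fin n → M), (∀ i, a i ∈ A) → Indep L a B C

/-- `A` is `H`-independent: `A` is independent from `H` over `A ∩ H`. -/
def HIndepSet (H A : Set M) : Prop :=
  SetIndep L A (A ∩ H) H

/-- A tuple is `H`-independent. -/
def HIndepTuple (H : Set M) {α : Type*} [Fintype α] (a : α → M) : Prop :=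
  Indep L a (Set.range a ∩ H) H

/-- `A` has finite dimension. -/
def FinDim (A : Set M) : Prop :=
  ∃ s : Finset M, A ⊆ acl L ↑s

/-- The exchange property for algebraic closure. -/
def Exchange (L' : FirstOrder.Language.{u, v}) (N : Type w) [L'.Structure N] : Prop :=
  ∀ (A : Set N) (a b : N), a ∈ acl L' (A ∪ {b}) → a ∉ acl L' A → b ∈ acl L' (A ∪ {a})

/-- Uniform elimination of the quantifier `∃^∞` in the structure `N`. -/
def ElimInfty (L' : FirstOrder.Language.{u, v}) (N : Type w) [L'.Structure N] : Prop :=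
  ∀ (q : ℕ) (φ : L'.Formula (Fin 1 ⊕ Fin q)), ∃ Nb : ℕ, ∀ v : Fin q → N,
    {x : N | φ.Realize (Sum.elim (fun _ => x) v)}.Finite →
      {x : N | φ.Realize (Sum.elim (fun _ => x) v)}.ncard ≤ Nb

/-- `N` is a geometric structure: acl satisfies exchange and `∃^∞` is eliminated. -/
def Geometric (L' : FirstOrder.Language.{u, v}) (N : Type w) [L'.Structure N] : Prop :=
  Exchange L' N ∧ ElimInfty L' N

/-- The density property of the pair `(M, H)`. -/
def DensityProp (H : Set M) : Prop :=
  ∀ A : Set M, FinDim L A → ∀ a : M, a ∉ acl L A →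
    ∃ h ∈ H, SameType L A (fun _ : Fin 1 => a) (fun _ => h)

/-- The extension property of the pair `(M, H)`. -/
def ExtensionProp (H : Set M) : Prop :=
  ∀ A : Set M, FinDim L A → ∀ a : M, a ∉ acl L A →
    ∃ b : M, b ∉ acl L (A ∪ H) ∧ SameType L A (fun _ : Fin 1 => a) (fun _ => b)

/-- `H` is an algebraically independent set. -/
def AclIndepSet (H : Set M) : Prop :=
  ∀ h ∈ H, h ∉ acl L (H \ {h})

/-- `(M, H)` is an `H`-structure. -/
def IsHStructure (H : Set M) : Prop :=
  DensityProp L H ∧ ExtensionProp L H ∧ AclIndepSet L H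

/-- `h` enumerates an `H`-basis of the tuple `a` over the set `A`: a minimal-length tuple of
distinct elements of `H` such that `a⌢h` is independent from `H` over `A`. -/
def IsHBasis (H : Set M) (A : Set M) {α : Type*} [Fintype α] {k : ℕ}
    (a : α → M) (h : Fin k → M) : Prop :=
  (∀ i, h i ∈ H) ∧ Function.Injective h ∧ Indep L (Sum.elim a h) A H ∧
    ∀ (k' : ℕ) (h' : Fin k' → M), (∀ i, h' i ∈ H) → Indep L (Sum.elim a h') A H → k ≤ k'

/-- Countable saturation (a rendering of "sufficiently saturated", adequate for
the countably-many-parameters arguments in the paper). -/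
def CountSaturated (L' : FirstOrder.Language.{u, v}) (N : Type w) [L'.Structure N] : Prop :=
  ∀ (A : Set N), A.Countable → ∀ (n : ℕ)
    (S : Set ((L'.withConstants A).Formula (Fin n))),
    (∀ F : Finset ((L'.withConstants A).Formula (Fin n)), ↑F ⊆ S →
      ∃ a : Fin n → N, ∀ φ ∈ F, φ.Realize a) →
    ∃ a : Fin n → N, ∀ φ ∈ S, φ.Realize a

/-- The theory of `M` is nowhere trivial. -/
def NowhereTrivial (L' : FirstOrder.Language.{u, v}) (N : Type w) [L'.Structure N] : Prop :=
  ∀ (A : Set N), A.Countable → ∀ a : N, a ∉ acl L' A →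
    ∃ (m k : ℕ) (b : Fin m → N) (c : Fin k → N),
      Indep L' (fun _ : Fin 1 => a) A (Set.range b) ∧
      Indep L' (fun _ : Fin 1 => a) A (Set.range c) ∧
      a ∈ acl L' ((A ∪ Set.range b) ∪ Set.range c)



/-- The formula `φ(x̄, b̄)` divides over `A`: there is an `A`-indiscernible sequence of
tuples, each with the same type as `b̄` over `A`, along which the instances of `φ` are
`k`-inconsistent. -/
def FormulaDivides {α : Type*} {m : ℕ} (φ : L.Formula (α ⊕ Fin m))
    (b : Fin m → M) (A : Set M) : Prop :=
  ∃ (bs : ℕ → Fin m → M) (k : ℕ), 0 < k ∧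
    (∀ i, SameType L A (bs i) b) ∧
    (∀ (l : ℕ) (f g : Fin l → ℕ), StrictMono f → StrictMono g →
      SameType L A (fun p : Fin l × Fin m => bs (f p.1) p.2)
        (fun p : Fin l × Fin m => bs (g p.1) p.2)) ∧
    (∀ s : Finset ℕ, s.card = k → ¬ ∃ x : α → M, ∀ i ∈ s, φ.Realize (Sum.elim x (bs i)))

/-- The formula `φ(x̄, b̄)` forks over `A`: it implies a finite disjunction of formulas,
each of which divides over `A`. -/
def FormulaForks {α : Type*} {m : ℕ} (φ : L.Formula (α ⊕ Fin m))
    (b : Fin m → M) (A : Set M) : Prop :=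
  ∃ (N : ℕ) (m' : Fin N → ℕ) (ψ : ∀ j, L.Formula (α ⊕ Fin (m' j)))
    (c : ∀ j, Fin (m' j) → M),
    (∀ j, FormulaDivides L (ψ j) (c j) A) ∧
    ∀ x : α → M, φ.Realize (Sum.elim x b) → ∃ j, (ψ j).Realize (Sum.elim x (c j))

/-- The type of `ā` over `B` forks over `A`. -/
def TypeForks {α : Type*} (a : α → M) (B A : Set M) : Prop :=
  ∃ (m : ℕ) (φ : L.Formula (α ⊕ Fin m)) (b : Fin m → M),
    (∀ i, b i ∈ B) ∧ φ.Realize (Sum.elim a b) ∧ FormulaForks L φ b A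

/-- `SUge L a A α` : the `SU`-rank of `tp(ā/A)` is at least `α`. -/
noncomputable def SUge {α' : Type*} (a : α' → M) (o : Ordinal.{0}) (A : Set M) : Prop :=
  Ordinal.lt_wf.fix (C := fun _ => Set M → Prop)
    (fun o ih A => ∀ β (h : β < o), ∃ B : Set M, A ⊆ B ∧ TypeForks L a B A ∧ ih β h B) o A

/-- The `SU`-rank of `tp(ā/A)`, as an ordinal (assuming it is ordinal-valued). -/
noncomputable def SU {α' : Type*} (a : α' → M) (A : Set M) : Ordinal.{0} :=
  sSup {o : Ordinal | SUge L a o A}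

/-- `T` has `SU`-rank one: every non-algebraic `1`-type has `SU`-rank `1`. -/
def SURankOne (L' : FirstOrder.Language.{u, v}) (N : Type w) [L'.Structure N] : Prop :=
  (∀ (a : N) (A : Set N), a ∈ acl L' A → SU L' (fun _ : Fin 1 => a) A = 0) ∧
  (∀ (a : N) (A : Set N), a ∉ acl L' A → SU L' (fun _ : Fin 1 => a) A = 1)

/-- The `SU`-rank of the (type-)definable set `X` over `A` equals `o` (and is attained). -/
def SUSetEq {α' : Type*} (X : Set (α' → M)) (A : Set M) (o : Ordinal.{0}) : Prop :=
  (∀ a ∈ X, SU L a A ≤ o) ∧ ∃ a ∈ X, SU L a A = o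

/-- The `SU`-rank of the set `X` over `A` is (strictly) less than `o`. -/
def SUSetLt {α' : Type*} (X : Set (α' → M)) (A : Set M) (o : Ordinal.{0}) : Prop :=
  ∀ a ∈ X, SU L a A < o

/-- Shorthand for the ordinal `ω·n + k`. -/
noncomputable def wnk (n k : ℕ) : Ordinal.{0} :=
  Ordinal.omega0 * (n : Ordinal) + (k : Ordinal)



/-- The language consisting of a single unary predicate. -/
def unaryLang : FirstOrder.Language.{0, 0} :=
  ⟨fun _ => Empty, fun n => match n with | 1 => PUnit | _ => Empty⟩

/-- Interpret the unary predicate of `unaryLang` as membership in `H`. -/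
def unaryStructure (H : Set M) : unaryLang.Structure M where
  funMap := fun {_} f _ => Empty.elim f
  RelMap := fun {n} r v =>
    match n, r, v with
    | 1, _, v => v 0 ∈ H
    | 0, r, _ => Empty.elim r
    | (_ + 2), r, _ => Empty.elim r

/-- The language `L_H = L ∪ {H}`. -/
def LH (L : FirstOrder.Language.{u, v}) : FirstOrder.Language :=
  L.sum unaryLang

/-- The `L_H`-structure on `M` induced by the `L`-structure and the set `H`. -/
def hStructure (H : Set M) : (LH L).Structure M :=
  letI : unaryLang.Structure M := unaryStructure H
  inferInstanceAs ((L.sum unaryLang).Structure M)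

/-- Realization of `L_H`-formulas in `(M, H)`. -/
def RealizeH (H : Set M) {α : Type*} (φ : (LH L).Formula α) (v : α → M) : Prop :=
  letI := hStructure L H
  φ.Realize v

/-- `L_H`-definability over a parameter set, in `(M, H)`. -/
def DefinableH (H : Set M) {α : Type*} (A : Set M) (s : Set (α → M)) : Prop :=
  letI := hStructure L H
  Set.Definable A (LH L) s

/-- `acl` in the sense of `L_H` in `(M, H)`. -/
noncomputable def aclH (H : Set M) (A : Set M) : Set M :=
  letI := hStructure L H
  acl (LH L) A

/-- Equality of `L_H`-types over a parameter set, in `(M, H)`. -/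
def SameTypeH (H : Set M) (A : Set M) {α : Type*} (a b : α → M) : Prop :=
  letI := hStructure L H
  SameType (LH L) A a b


/-- `SU`-rank in the sense of `L_H`, computed in `(M, H)`. -/
noncomputable def SUH (H : Set M) {α' : Type*} (a : α' → M) (A : Set M) : Ordinal.{0} :=
  letI := hStructure L H
  SU (LH L) a A

/-- `SUge` in the sense of `L_H`, computed in `(M, H)`. -/
noncomputable def SUgeH (H : Set M) {α' : Type*} (a : α' → M) (o : Ordinal.{0})
    (A : Set M) : Prop :=
  letI := hStructure L H
  SUge (LH L) a o A

/-- The `L_H`-`SU`-rank of the set `X` over `A` equals `o` (and is attained). -/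
def SUSetEqH (H : Set M) {α' : Type*} (X : Set (α' → M)) (A : Set M)
    (o : Ordinal.{0}) : Prop :=
  letI := hStructure L H
  SUSetEq (LH L) X A o

/-- The `L_H`-`SU`-rank of the set `X` over `A` is less than `o`. -/
def SUSetLtH (H : Set M) {α' : Type*} (X : Set (α' → M)) (A : Set M)
    (o : Ordinal.{0}) : Prop :=
  letI := hStructure L H
  SUSetLt (LH L) X A o


/-- `(M, H)` is countably saturated as an `L_H`-structure. -/
def CountSaturatedH (H : Set M) : Prop :=
  letI := hStructure L H
  CountSaturated (LH L) M



section AlgebraicClosure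

open Set FirstOrder.Language

variable {L} {A B : Set M} {α β : Type*}

/-- The fibre over `u` of a set of tuples, with respect to the last coordinate. -/
def fiber (R : Set (β ⊕ Fin 1 → M)) (u : β → M) : Set M :=
  {y | Sum.elim u (fun _ => y) ∈ R}

theorem mem_fiber {R : Set (β ⊕ Fin 1 → M)} {u : β → M} {y : M} :
    y ∈ fiber R u ↔ Sum.elim u (fun _ => y) ∈ R := Iff.rfl

theorem mem_acl_iff {x : M} : x ∈ acl L A ↔ ∃ D : Set (Fin 1 → M), A.Definable L D ∧
    {y : M | (fun _ => y) ∈ D}.Finite ∧ (fun _ => x) ∈ D := by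
  constructor
  · rintro ⟨φ, hfin, hx⟩
    exact ⟨_, ⟨φ, rfl⟩, hfin, hx⟩
  · rintro ⟨_, ⟨φ, rfl⟩, hfin, hx⟩
    exact ⟨φ, hfin, hx⟩

theorem acl_mono (h : A ⊆ B) : acl L A ⊆ acl L B := by
  intro x hx
  obtain ⟨D, hD, hfin, hx⟩ := mem_acl_iff.1 hx
  exact mem_acl_iff.2 ⟨D, hD.mono h, hfin, hx⟩

theorem subset_acl : A ⊆ acl L A := fun x hx =>
  mem_acl_iff.2 ⟨_, Definable.singleton_of_mem L hx, by simp, rfl⟩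

theorem exists_finset_mem_acl {x : M} (hx : x ∈ acl L A) :
    ∃ s : Finset M, (s : Set M) ⊆ A ∧ x ∈ acl L (s : Set M) := by
  obtain ⟨D, hD, hfin, hx⟩ := mem_acl_iff.1 hx
  obtain ⟨s, hs, hD⟩ := definable_iff_finitely_definable.1 hD
  exact ⟨s, hs, mem_acl_iff.2 ⟨D, hD, hfin, hx⟩⟩

/-- Substituting parameters for some of the variables of a definable set. -/
theorem definable_sumElim [Finite α] [Finite β] {R : Set (β ⊕ α → M)} (hR : A.Definable L R)
    {u : β → M} (hu : range u ⊆ A) : A.Definable L {y : α → M | Sum.elim u y ∈ R} := by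
  refine hR.preimage_map (F := fun y => Sum.elim u y) ?_
  rintro (i | i)
  · exact L.definableFun_const _ (hu (mem_range_self i))
  · exact DefinableFun.proj L

theorem mem_acl_of_mem_fiber [Finite β] {R : Set (β ⊕ Fin 1 → M)}
    (hR : (∅ : Set M).Definable L R) {u : β → M} (hfin : (fiber R u).Finite) {x : M}
    (hx : x ∈ fiber R u) : x ∈ acl L (range u) :=
  mem_acl_iff.2 ⟨_, definable_sumElim (hR.mono (empty_subset _)) subset_rfl, hfin, hx⟩

theorem exists_fiber_of_mem_acl {u : β → M} {x : M} (hx : x ∈ acl L (range u)) :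
    ∃ R : Set (β ⊕ Fin 1 → M), (∅ : Set M).Definable L R ∧ (fiber R u).Finite ∧
      x ∈ fiber R u := by
  obtain ⟨D, hD, hfin, hx⟩ := mem_acl_iff.1 hx
  obtain ⟨φ, rfl⟩ := definable_iff_exists_formula_sum.1 hD
  have key : ∀ y : M, y ∈ fiber {w | (φ.relabel
      (Sum.map (rangeSplitting u) id)).Realize w} u ↔ φ.Realize (Sum.elim (↑) fun _ => y) := by
    intro y
    rw [mem_fiber, mem_ofPred_eq, Formula.realize_relabel]
    refine iff_of_eq (congrArg _ ?_)
    funext i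
    rcases i with i | i
    · simp [apply_rangeSplitting]
    · rfl
  refine ⟨_, empty_definable_iff.2 ⟨_, rfl⟩, hfin.subset fun y hy => (key y).1 hy, (key x).2 hx⟩

theorem definable_substitution {R : Set (α → M)} (hR : A.Definable L R)
    {F : (β → M) → α → M} (σ : α → β) (h : ∀ g i, F g i = g (σ i)) :
    A.Definable L {g | F g ∈ R} := by
  convert! hR.preimage_comp σ using 1
  ext g
  rw [mem_ofPred_eq, mem_preimage, show F g = g ∘ σ from funext (h g)]

theorem definable_le_card_fiber {R : Set (β ⊕ Fin 1 → M)} (hR : A.Definable L R) (N : ℕ) :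
    A.Definable L {v : β → M | ∃ f : Fin N → M, Function.Injective f ∧ ∀ i, f i ∈ fiber R v} := by
  have h₁ : A.Definable L (⋂ i : Fin N,
      (fun g : β ⊕ Fin N → M => g ∘ Sum.map id (fun _ : Fin 1 => i)) ⁻¹' R) :=
    definable_iInter_of_finite fun i => hR.preimage_comp _
  have h₂ : A.Definable L (⋂ i : Fin N, ⋂ j : Fin N,
      {g : β ⊕ Fin N → M | g (Sum.inr i) = g (Sum.inr j) → i = j}) := by
    refine definable_iInter_of_finite fun i => definable_iInter_of_finite fun j => ?_
    by_cases hij : i = j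
    · simp [hij]
    · simpa [hij, compl_ofPred] using (DefinableFun.ofPred_eq (L := L) (A := A)
        (DefinableFun.proj L (i := (Sum.inr i : β ⊕ Fin N)))
        (DefinableFun.proj L (i := Sum.inr j))).compl
  convert! (h₂.inter h₁).exists_of_finite using 1
  ext v
  simp only [mem_ofPred_eq, mem_inter_iff, mem_iInter, Sum.elim_inr, mem_preimage, mem_fiber]
  refine exists_congr fun f => and_congr Iff.rfl (forall_congr' fun i => iff_of_eq ?_)
  congr 1
  funext j
  rcases j with j | j <;> rfl

theorem exists_injective_of_infinite {s : Set M} (hs : s.Infinite) (N : ℕ) :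
    ∃ f : Fin N → M, Function.Injective f ∧ ∀ i, f i ∈ s := by
  have := hs.to_subtype
  exact ⟨fun i => Infinite.natEmbedding s i,
    fun i j h => Fin.ext ((Infinite.natEmbedding s).injective (Subtype.ext h)),
    fun i => (Infinite.natEmbedding s i).2⟩

theorem le_ncard_of_injective {s : Set M} (hs : s.Finite) {N : ℕ} {f : Fin N → M}
    (hf : Function.Injective f) (hfs : ∀ i, f i ∈ s) : N ≤ s.ncard := by
  have h := ncard_le_ncard (range_subset_iff.2 hfs) hs
  rwa [← image_univ, ncard_image_of_injective _ hf, ncard_univ, Nat.card_fin] at h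

theorem ElimInfty.definable_infinite (hE : ElimInfty L M) [Finite β]
    {R : Set (β ⊕ Fin 1 → M)} (hR : (∅ : Set M).Definable L R) :
    (∅ : Set M).Definable L {v : β → M | (fiber R v).Infinite} := by
  obtain ⟨φ, rfl⟩ := empty_definable_iff.1 hR
  obtain ⟨n, ⟨e⟩⟩ := Finite.exists_equiv_fin β
  obtain ⟨N, hN⟩ := hE n (φ.relabel (Sum.elim (fun i => Sum.inr (e i)) Sum.inl))
  have key : ∀ v : β → M, {x : M | (φ.relabel (Sum.elim (fun i => Sum.inr (e i))
      Sum.inl)).Realize (Sum.elim (fun _ : Fin 1 => x) (v ∘ e.symm))} =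
      fiber (Set.ofPred φ.Realize) v := by
    intro v
    ext x
    rw [mem_fiber, mem_ofPred_eq, mem_ofPred_eq, Formula.realize_relabel]
    refine iff_of_eq (congrArg _ ?_)
    funext i
    rcases i with i | i <;> simp
  convert! definable_le_card_fiber hR (N + 1) using 1
  ext v
  refine ⟨fun h => exists_injective_of_infinite h _, ?_⟩
  rintro ⟨f, hf, hfs⟩ hfin
  have h := hN (v ∘ e.symm)
  rw [key v] at h
  have := le_ncard_of_injective hfin hf hfs
  have := h hfin
  omega

theorem ElimInfty.definable_finite (hE : ElimInfty L M) [Finite β]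
    {R : Set (β ⊕ Fin 1 → M)} (hR : (∅ : Set M).Definable L R) :
    (∅ : Set M).Definable L {v : β → M | (fiber R v).Finite} := by
  simpa [compl_ofPred] using (hE.definable_infinite hR).compl

theorem ElimInfty.mem_acl_of_mem_acl_insert (hE : ElimInfty L M) {b h : M}
    (hb : b ∈ acl L A) (hh : h ∈ acl L (insert b A)) : h ∈ acl L A := by
  classical
  obtain ⟨s, hsA, hs⟩ := exists_finset_mem_acl hb
  obtain ⟨t, htA, ht⟩ := exists_finset_mem_acl hh
  set C : Finset M := s ∪ t.erase b with hC
  have hCA : (C : Set M) ⊆ A := by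
    intro x hx
    rcases Finset.mem_union.1 hx with hx | hx
    · exact hsA hx
    · obtain ⟨hxb, hx⟩ := Finset.mem_erase.1 hx
      exact (htA hx).resolve_left hxb
  let u : C → M := (↑)
  have hu : range u = C := Subtype.range_coe
  refine acl_mono hCA ?_
  have hbC : b ∈ acl L (range u) := by
    rw [hu]; exact acl_mono (by simp [hC]) hs
  have hhC : h ∈ acl L (range (Sum.elim u fun _ : Fin 1 => b)) := by
    refine acl_mono ?_ ht
    intro x hx
    rw [Sum.elim_range, hu]
    by_cases hxb : x = b
    · exact Or.inr ⟨0, hxb.symm⟩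
    · exact Or.inl (by simpa [hC, hxb] using Or.inr hx)
  rw [← hu]
  obtain ⟨Q, hQ, hQfin, hbQ⟩ := exists_fiber_of_mem_acl hbC
  obtain ⟨R, hR, hRfin, hhR⟩ := exists_fiber_of_mem_acl hhC
  have hS : (∅ : Set M).Definable L {v : C ⊕ Fin 1 → M | ∃ y : Fin 1 → M,
      Sum.elim v y ∈ {g : (C ⊕ Fin 1) ⊕ Fin 1 → M |
        Sum.elim (fun i => g (.inl (.inl i))) (fun i => g (.inr i)) ∈
          Q ∩ {w | (fiber R w).Finite}} ∩
      {g | Sum.elim (Sum.elim (fun i => g (.inl (.inl i))) (fun i => g (.inr i)))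
        (fun i => g (.inl (.inr i))) ∈ R}} := by
    refine Definable.exists_of_finite (.inter ?_ ?_)
    · exact definable_substitution (hQ.inter (hE.definable_finite hR))
        (Sum.elim (.inl ∘ .inl) .inr) (by rintro g (i | i) <;> rfl)
    · exact definable_substitution hR (Sum.elim (Sum.elim (.inl ∘ .inl) .inr) (.inl ∘ .inr))
        (by rintro g ((i | i) | i) <;> rfl)
  refine mem_acl_of_mem_fiber hS ?_ ⟨fun _ => b, ⟨hbQ, hRfin⟩, hhR⟩
  refine (hQfin.biUnion (t := fun y => {x | (fiber R (Sum.elim u fun _ => y)).Finite ∧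
    x ∈ fiber R (Sum.elim u fun _ => y)}) ?_).subset ?_
  · intro y _
    by_cases hy : (fiber R (Sum.elim u fun _ => y)).Finite
    · exact hy.subset fun x hx => hx.2
    · exact (finite_empty (α := M)).subset fun x hx => hy hx.1
  · rintro x ⟨y, ⟨hyQ, hyfin⟩, hxR⟩
    obtain ⟨y, rfl⟩ : ∃ z, y = fun _ => z := ⟨y 0, funext fun i => by rw [Subsingleton.elim i 0]⟩
    exact mem_biUnion (x := y) hyQ ⟨hyfin, hxR⟩

end AlgebraicClosure

section Exchange

open Set

variable {L} {H : Set M}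

/-- All but finitely many elements of an independent set `H` remain independent
over the rest of `H` together with a given finite set. -/
theorem Geometric.exists_finite_base (hgeom : Geometric L M) (hH : AclIndepSet L H)
    {A : Set M} (hA : A.Finite) :
    ∃ H₀ ⊆ H, H₀.Finite ∧ ∀ h ∈ H, h ∉ H₀ → h ∉ acl L (A ∪ (H \ {h})) := by
  induction A, hA using Set.Finite.induction_on with
  | empty => exact ⟨∅, empty_subset _, finite_empty, fun h hh _ => by simpa using hH h hh⟩
  | @insert b A _ _ ih =>
    obtain ⟨H₀, hH₀, hfin, hind⟩ := ih
    by_cases hb : b ∈ acl L (A ∪ H)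
    · obtain ⟨s, hs, hbs⟩ := exists_finset_mem_acl hb
      refine ⟨H₀ ∪ (↑s ∩ H), union_subset hH₀ inter_subset_right,
        hfin.union (s.finite_toSet.inter_of_left _), fun h hh hnot hmem => ?_⟩
      refine hind h hh (fun h' => hnot (.inl h')) (hgeom.2.mem_acl_of_mem_acl_insert ?_
        (by rwa [insert_union] at hmem))
      refine acl_mono (fun x hx => ?_) hbs
      rcases hs hx with hxA | hxH
      · exact .inl hxA
      · exact .inr ⟨hxH, fun hxh => hnot (.inr ⟨hxh ▸ hx, hh⟩)⟩
    · refine ⟨H₀, hH₀, hfin, fun h hh hnot hmem => hb ?_⟩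
      have := hgeom.1 (A ∪ (H \ {h})) h b (by rwa [union_singleton, ← insert_union])
        (hind h hh hnot)
      rwa [union_assoc, sdiff_union_self, union_singleton, insert_eq_of_mem hh] at this

theorem Exchange.exists_mem_acl_insert (hex : Exchange L M) {B Z : Set M} (hZ : Z.Finite) {x : M}
    (hx : x ∉ acl L B) (hxZ : x ∈ acl L (B ∪ Z)) :
    ∃ h ∈ Z, h ∉ B ∧ h ∈ acl L (insert x (B ∪ (Z \ {h}))) := by
  induction Z, hZ using Set.Finite.induction_on with
  | empty => exact absurd (by simpa using hxZ) hx
  | @insert b Z hbZ _ ih =>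
    by_cases hxZ' : x ∈ acl L (B ∪ Z)
    · obtain ⟨h, hhZ, hhB, hh⟩ := ih hxZ'
      refine ⟨h, .inr hhZ, hhB, acl_mono ?_ hh⟩
      exact insert_subset_insert (union_subset_union_right _
        (sdiff_subset_sdiff_left (subset_insert _ _)))
    · have hbB : b ∉ B := fun hb => hxZ' (by
        rwa [union_insert, insert_eq_of_mem (mem_union_left Z hb)] at hxZ)
      refine ⟨b, .inl rfl, hbB, ?_⟩
      rw [insert_sdiff_of_mem _ (mem_singleton b), sdiff_singleton_eq_self hbZ, ← union_singleton]
      exact hex _ _ _ (by rwa [union_singleton, ← union_insert]) hxZ'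

end Exchange

section Saturation

open Set FirstOrder.Language

variable {L}

theorem CountSaturated.exists_notMem_acl (hsat : CountSaturated L M) {A : Set M}
    (hA : A.Countable) {D : Set (Fin 1 → M)} (hD : A.Definable L D)
    (hinf : {y : M | (fun _ => y) ∈ D}.Infinite) : ∃ d : M, (fun _ => d) ∈ D ∧ d ∉ acl L A := by
  obtain ⟨a, ha⟩ := hsat A hA 1
    {φ | {y : M | (fun _ => y) ∈ D ∧ ¬ φ.Realize (fun _ => y)}.Finite} (by
      intro F hF
      obtain ⟨y, hyD, hy⟩ := (hinf.sdiff (F.finite_toSet.biUnion hF)).nonempty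
      refine ⟨fun _ => y, fun φ hφ => ?_⟩
      by_contra hy'
      exact hy (mem_biUnion hφ ⟨hyD, hy'⟩))
  obtain ⟨d, rfl⟩ : ∃ d, a = fun _ => d := ⟨a 0, funext fun i => by rw [Subsingleton.elim i 0]⟩
  obtain ⟨ψ, rfl⟩ := hD
  refine ⟨d, ha ψ ?_, ?_⟩
  · exact (finite_empty (α := M)).subset fun y hy => hy.2 hy.1
  · rintro ⟨φ, hfin, hd⟩
    refine ha φ.not ?_ hd
    refine hfin.subset fun y hy => ?_
    simpa using hy.2

/-- In a saturated structure, a set such that both it and its complement are unions of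
`∅`-definable sets is `∅`-definable. -/
theorem CountSaturated.definable_of_forall_exists (hsat : CountSaturated L M) {n : ℕ}
    {E : Set (Fin n → M)}
    (h : ∀ a, ∃ D : Set (Fin n → M), (∅ : Set M).Definable L D ∧ a ∈ D ∧ (D ⊆ E ∨ D ⊆ Eᶜ)) :
    (∅ : Set M).Definable L E := by
  classical
  by_contra hE
  obtain ⟨a, ha⟩ := hsat ∅ countable_empty n
    {φ | (Set.ofPred φ.Realize)ᶜ ⊆ E ∨ (Set.ofPred φ.Realize)ᶜ ⊆ Eᶜ} (by
      intro F hF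
      by_contra hno
      push Not at hno
      refine hE ?_
      convert definable_biUnion_finset
        (fun φ : (L.withConstants (∅ : Set M)).Formula (Fin n) =>
          (⟨φ.not, by ext; simp⟩ : (∅ : Set M).Definable L (Set.ofPred φ.Realize)ᶜ))
        (F.filter fun φ => (Set.ofPred φ.Realize)ᶜ ⊆ E) using 1
      ext a
      simp only [mem_iUnion, Finset.mem_filter]
      constructor
      · intro haE
        obtain ⟨φ, hφF, hφ⟩ := hno a
        exact ⟨φ, ⟨hφF, (hF hφF).resolve_right fun h' => h' hφ haE⟩, hφ⟩
      · rintro ⟨φ, ⟨-, hφE⟩, hφ⟩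
        exact hφE hφ)
  obtain ⟨D, ⟨φ, rfl⟩, haD, hD⟩ := h a
  refine ha φ.not ?_ haD
  have : (Set.ofPred φ.not.Realize)ᶜ = (Set.ofPred φ.Realize : Set (Fin n → M)) := by
    ext; simp
  rwa [mem_ofPred_eq, this]

end Saturation

section HStructure

open Set FirstOrder.Language

variable {L} {H A : Set M} {α β : Type*}

theorem definableH_of_definable {D : Set (α → M)} (hD : A.Definable L D) :
    DefinableH L H A D := by
  let : unaryLang.Structure M := unaryStructure H
  have h := hD.map_expansion (LHom.sumInl : L →ᴸ L.sum unaryLang)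
  exact h

theorem definableH_mem (i : α) : DefinableH L H A {v : α → M | v i ∈ H} := by
  let : unaryLang.Structure M := unaryStructure H
  have h : A.Definable unaryLang {v : α → M | v i ∈ H} :=
    (empty_definable_iff.2 ⟨Relations.formula (n := 1) PUnit.unit ![Term.var i], by
      ext v
      simp
      rfl⟩ : (∅ : Set M).Definable unaryLang _).mono (empty_subset _)
  have h' := h.map_expansion (LHom.sumInr : unaryLang →ᴸ L.sum unaryLang)
  exact h'

theorem DefinableH.exists_mem [Finite β] {S : Set (α ⊕ β → M)} (hS : DefinableH L H A S) :
    DefinableH L H A {v : α → M | ∃ z : β → M, (∀ i, z i ∈ H) ∧ Sum.elim v z ∈ S} := by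
  let := hStructure L H
  have h : A.Definable (LH L) (⋂ i : β, {v : α ⊕ β → M | v (Sum.inr i) ∈ H}) :=
    definable_iInter_of_finite fun i => definableH_mem (Sum.inr i)
  have h' := (h.inter hS).exists_of_finite
  simpa only [mem_inter_iff, mem_iInter, mem_ofPred_eq, Sum.elim_inr] using! h'

theorem CountSaturatedH.exists_notMem_acl (hsat : CountSaturatedH L H) (hA : A.Countable)
    {D : Set (Fin 1 → M)} (hD : DefinableH L H A D)
    (hinf : {y : M | (fun _ => y) ∈ D}.Infinite) : ∃ d : M, (fun _ => d) ∈ D ∧ d ∉ acl L A := by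
  let := hStructure L H
  obtain ⟨d, hdD, hd⟩ := CountSaturated.exists_notMem_acl hsat hA hD hinf
  refine ⟨d, hdD, fun h => hd ?_⟩
  obtain ⟨D', hD', hfin, hd'⟩ := mem_acl_iff.1 h
  exact mem_acl_iff.2 ⟨D', definableH_of_definable hD', hfin, hd'⟩

/-- An infinite `L`-definable set meets `H` in an infinite set. -/
theorem DensityProp.infinite_inter (hdens : DensityProp L H) (hsat : CountSaturatedH L H)
    (hA : A.Finite) {D : Set (Fin 1 → M)} (hD : A.Definable L D)
    (hinf : {y : M | (fun _ => y) ∈ D}.Infinite) : {y : M | (fun _ => y) ∈ D ∧ y ∈ H}.Infinite := by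
  intro hfin
  have hfinite := hA.union hfin
  obtain ⟨d, hdD, hd⟩ := hsat.exists_notMem_acl hfinite.countable
    (definableH_of_definable (hD.mono subset_union_left)) hinf
  obtain ⟨h, hhH, hh⟩ := hdens _ ⟨hfinite.toFinset, by rw [hfinite.coe_toFinset]; exact subset_acl⟩ d hd
  have htype : ∀ D' : Set (Fin 1 → M), (A ∪ {y : M | (fun _ => y) ∈ D ∧ y ∈ H}).Definable L D' →
      ((fun _ => d) ∈ D' ↔ (fun _ => h) ∈ D') := by
    rintro _ ⟨φ, rfl⟩
    exact hh φ
  have hhD := (htype D (hD.mono subset_union_left)).1 hdD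
  have hmem : h ∈ A ∪ {y : M | (fun _ => y) ∈ D ∧ y ∈ H} := .inr ⟨hhD, hhH⟩
  have hdh : d = h := (htype _ (Definable.singleton_of_mem L hmem)).2 rfl
  exact hd (subset_acl (hdh ▸ hmem))

/-- The set of solutions `x` of `∃ z̄ ∈ H, φ(x, z̄, a)`. -/
def existsHSet (H : Set M) {m q : ℕ} (φ : L.Formula ((Fin 1 ⊕ Fin m) ⊕ Fin q)) (a : Fin q → M) :
    Set M :=
  {x : M | ∃ z : Fin m → M, (∀ i, z i ∈ H) ∧
    φ.Realize (Sum.elim (Sum.elim (fun _ => x) z) a)}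

variable {m q : ℕ} (φ : L.Formula ((Fin 1 ⊕ Fin m) ⊕ Fin q))

theorem exists_definableH_fiber_eq_existsHSet (H : Set M) : ∃ R : Set (Fin q ⊕ Fin 1 → M),
    DefinableH L H ∅ R ∧ ∀ a, fiber R a = existsHSet H φ a := by
  have h : (∅ : Set M).Definable L {g : (Fin q ⊕ Fin 1) ⊕ Fin m → M |
      Sum.elim (Sum.elim (fun i => g (.inl (.inr i))) fun i => g (.inr i))
        (fun i => g (.inl (.inl i))) ∈ Set.ofPred φ.Realize} :=
    definable_substitution (empty_definable_iff.2 ⟨φ, rfl⟩)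
      (Sum.elim (Sum.elim (.inl ∘ .inr) .inr) (.inl ∘ .inl))
      (by rintro g ((i | i) | i) <;> rfl)
  exact ⟨_, (definableH_of_definable h).exists_mem, fun a => rfl⟩

/-- If some instance `φ(x, z̄, a)` with `z̄` in `H` is non-algebraic, this is witnessed by an
`L_H`-formula satisfied by `a`. -/
theorem exists_definableH_of_infinite_instance (hE : ElimInfty L M) {a : Fin q → M}
    {z : Fin m → M} (hz : ∀ i, z i ∈ H)
    (hinf : {x : M | φ.Realize (Sum.elim (Sum.elim (fun _ => x) z) a)}.Infinite) :
    ∃ X : Set (Fin q → M), DefinableH L H ∅ X ∧ a ∈ X ∧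
      ∀ b ∈ X, (existsHSet H φ b).Infinite := by
  have h : (∅ : Set M).Definable L {g : (Fin q ⊕ Fin m) ⊕ Fin 1 → M |
      Sum.elim (Sum.elim (fun i => g (.inr i)) fun i => g (.inl (.inr i)))
        (fun i => g (.inl (.inl i))) ∈ Set.ofPred φ.Realize} :=
    definable_substitution (empty_definable_iff.2 ⟨φ, rfl⟩)
      (Sum.elim (Sum.elim .inr (.inl ∘ .inr)) (.inl ∘ .inl))
      (by rintro g ((i | i) | i) <;> rfl)
  refine ⟨_, (definableH_of_definable (hE.definable_infinite h)).exists_mem, ⟨z, hz, hinf⟩, ?_⟩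
  rintro b ⟨z', hz', hinf'⟩
  exact hinf'.mono fun x hx => ⟨z', hz', hx⟩

/-- If `φ(x, z̄, a)` holds with `z̄` consisting of elements of `H`, one of which is `h`, where
`h` is interalgebraic with `x` over `a` and the other elements `w` but not algebraic over
`a` and `w`, then non-algebraicity is witnessed by an `L_H`-formula satisfied by `a`. -/
theorem exists_definableH_of_mem_acl (hE : ElimInfty L M) (hdens : DensityProp L H)
    (hsat : CountSaturatedH L H) {ι : Type*} [Finite ι] {a : Fin q → M} {w : ι → M} {x h : M}
    (hw : ∀ i, w i ∈ H) (σ : Fin m → ι ⊕ Fin 1)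
    (hφ : φ.Realize (Sum.elim (Sum.elim (fun _ => x)
      fun i => Sum.elim w (fun _ => h) (σ i)) a))
    (hh : h ∉ acl L (range (Sum.elim w a)))
    (hhx : h ∈ acl L (range (Sum.elim (Sum.elim w a) fun _ : Fin 1 => x))) :
    ∃ X : Set (Fin q → M), DefinableH L H ∅ X ∧ a ∈ X ∧
      ∀ b ∈ X, (existsHSet H φ b).Infinite := by
  obtain ⟨R, hR, hRfin, hhR⟩ := exists_fiber_of_mem_acl hhx
  set P : Set ((ι ⊕ Fin q) ⊕ Fin 1 → M) := {v | ∃ y : Fin 1 → M, Sum.elim v y ∈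
      ({g : ((ι ⊕ Fin q) ⊕ Fin 1) ⊕ Fin 1 → M |
        Sum.elim (Sum.elim (fun i => g (.inr i))
          fun i => Sum.elim (fun j => g (.inl (.inl (.inl j)))) (fun j => g (.inl (.inr j))) (σ i))
          (fun i => g (.inl (.inl (.inr i)))) ∈ Set.ofPred φ.Realize} ∩
      {g | Sum.elim (fun i => g (.inl (.inl i))) (fun i => g (.inr i)) ∈
        {u | (fiber R u).Finite}}) ∩
      {g | Sum.elim (Sum.elim (fun i => g (.inl (.inl i))) (fun i => g (.inr i)))
        (fun i => g (.inl (.inr i))) ∈ R}}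
  have hP : (∅ : Set M).Definable L P := by
    refine Definable.exists_of_finite (.inter (.inter ?_ ?_) ?_)
    · refine definable_substitution (empty_definable_iff.2 ⟨φ, rfl⟩)
        (Sum.elim (Sum.elim .inr fun i =>
          Sum.elim (fun j => .inl (.inl (.inl j))) (fun j => .inl (.inr j)) (σ i))
          (fun i => .inl (.inl (.inr i)))) ?_
      rintro g ((i | i) | i)
      · rfl
      · rcases hσ : σ i with j | j <;> simp [hσ]
      · rfl
    · exact definable_substitution (hE.definable_finite hR)
        (Sum.elim (.inl ∘ .inl) .inr) (by rintro g (i | i) <;> rfl)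
    · exact definable_substitution hR (Sum.elim (Sum.elim (.inl ∘ .inl) .inr) (.inl ∘ .inr))
        (by rintro g ((i | i) | i) <;> rfl)
  have hinf : (∅ : Set M).Definable L {v : Fin q ⊕ ι → M |
      Sum.elim (fun i => v (.inr i)) (fun i => v (.inl i)) ∈ {u | (fiber P u).Infinite}} :=
    definable_substitution (hE.definable_infinite hP) (Sum.elim .inr .inl)
      (by rintro g (i | i) <;> rfl)
  refine ⟨_, (definableH_of_definable hinf).exists_mem, ⟨w, hw, fun hfin => hh ?_⟩, ?_⟩
  · exact mem_acl_of_mem_fiber hP hfin ⟨fun _ => x, ⟨hφ, hRfin⟩, hhR⟩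
  rintro b ⟨w', hw', hinf'⟩ hfin
  refine hdens.infinite_inter hsat (finite_range (Sum.elim w' b))
    (definable_sumElim (hP.mono (empty_subset _)) subset_rfl) hinf' ?_
  refine (hfin.biUnion (t := fun y => {k | (fiber R (Sum.elim (Sum.elim w' b) fun _ => y)).Finite ∧
    k ∈ fiber R (Sum.elim (Sum.elim w' b) fun _ => y)}) ?_).subset ?_
  · intro y _
    by_cases hy : (fiber R (Sum.elim (Sum.elim w' b) fun _ => y)).Finite
    · exact hy.subset fun k hk => hk.2
    · exact (finite_empty (α := M)).subset fun k hk => hy hk.1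
  · rintro k ⟨⟨y, ⟨hyφ, hyfin⟩, hkR⟩, hkH⟩
    obtain ⟨y, rfl⟩ : ∃ x, y = fun _ => x := ⟨y 0, funext fun i => by rw [Subsingleton.elim i 0]⟩
    refine mem_biUnion (x := y) ⟨_, fun i => ?_, hyφ⟩ ⟨hyfin, hkR⟩
    rcases hσ : σ i with j | j
    · exact hw' j
    · exact hkH

theorem exists_definableH_of_infinite (hgeom : Geometric L M) (hH : IsHStructure L H)
    (hsat : CountSaturatedH L H) {a : Fin q → M} (ha : (existsHSet H φ a).Infinite) :
    ∃ X : Set (Fin q → M), DefinableH L H ∅ X ∧ a ∈ X ∧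
      ∀ b ∈ X, (existsHSet H φ b).Infinite := by
  obtain ⟨H₀, hH₀, hH₀fin, hind⟩ := hgeom.exists_finite_base hH.2.2 (finite_range a)
  obtain ⟨R, hR, hRfib⟩ := exists_definableH_fiber_eq_existsHSet φ H
  have hDa : DefinableH L H (range a ∪ H₀) {y : Fin 1 → M | Sum.elim a y ∈ R} := by
    let := hStructure L H
    exact definable_sumElim (Definable.mono hR (empty_subset _)) subset_union_left
  obtain ⟨x, hxR, hx⟩ := hsat.exists_notMem_acl ((finite_range a).union hH₀fin).countable hDa
    (by rw [← hRfib a] at ha; exact ha)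
  obtain ⟨z, hz, hφ⟩ : x ∈ existsHSet H φ a := by rw [← hRfib a]; exact hxR
  by_cases hinf : {x : M | φ.Realize (Sum.elim (Sum.elim (fun _ => x) z) a)}.Infinite
  · exact exists_definableH_of_infinite_instance φ hgeom.2 hz hinf
  have hxz : x ∈ acl L (range (Sum.elim z a)) := by
    refine mem_acl_of_mem_fiber (u := Sum.elim z a)
      (R := {g : (Fin m ⊕ Fin q) ⊕ Fin 1 → M | Sum.elim (Sum.elim (fun i => g (.inr i))
        fun i => g (.inl (.inl i))) (fun i => g (.inl (.inr i))) ∈ Set.ofPred φ.Realize}) ?_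
      (not_infinite.1 hinf) hφ
    exact definable_substitution (empty_definable_iff.2 ⟨φ, rfl⟩)
      (Sum.elim (Sum.elim .inr (.inl ∘ .inl)) (.inl ∘ .inr))
      (by rintro g ((i | i) | i) <;> rfl)
  rw [Sum.elim_range] at hxz
  obtain ⟨h, ⟨i₀, rfl⟩, hhB, hhx⟩ := hgeom.1.exists_mem_acl_insert (finite_range z) hx
    (acl_mono (union_subset subset_union_right
      (subset_union_left.trans subset_union_left)) hxz)
  set W : Set M := H₀ ∪ (range z \ {z i₀})
  have hWH : W ⊆ H \ {z i₀} := by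
    rintro y (hy | ⟨⟨i, rfl⟩, hy⟩)
    · exact ⟨hH₀ hy, fun hyz => hhB (.inr (hyz ▸ hy))⟩
    · exact ⟨hz i, hy⟩
  have : Finite W := (hH₀fin.union (finite_range z).sdiff).to_subtype
  have hσ : ∀ i, ∃ j : W ⊕ Fin 1, Sum.elim (↑) (fun _ => z i₀) j = z i := by
    intro i
    by_cases hi : z i = z i₀
    · exact ⟨.inr 0, hi.symm⟩
    · exact ⟨.inl ⟨z i, .inr ⟨mem_range_self i, hi⟩⟩, rfl⟩
  choose σ hσ using hσ
  refine exists_definableH_of_mem_acl φ hgeom.2 hH.1 hsat (w := ((↑) : W → M)) (x := x)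
    (h := z i₀) (fun i => (hWH i.2).1) σ ?_ ?_ ?_
  · simpa only [hσ] using hφ
  · refine fun hmem => hind _ (hz i₀) (fun h' => hhB (.inr h')) (acl_mono ?_ hmem)
    rw [Sum.elim_range, Subtype.range_coe]
    exact union_subset (hWH.trans subset_union_right) subset_union_left
  · refine acl_mono ?_ hhx
    rw [Sum.elim_range, Sum.elim_range, Subtype.range_coe, range_const, union_singleton,
      union_assoc, union_comm (range a)]

end HStructure

/-- (Lemma 3.2.) In a sufficiently saturated `H`-structure, for an
`L`-formula `φ(x, z̄, ȳ)`, the set of parameters `ā` for which the existential `H`-formula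
`∃z̄ ∈ H^{|z̄|} φ(x, z̄, ā)` is non-algebraic is `L_H`-definable. -/
theorem statement6 {M : Type w} (L : FirstOrder.Language.{u, v}) [L.Structure M]
    (H : Set M) (hgeom : Geometric L M) (hH : IsHStructure L H)
    (hsat : CountSaturatedH L H)
    {m q : ℕ} (φ : L.Formula ((Fin 1 ⊕ Fin m) ⊕ Fin q)) :
    DefinableH L H (∅ : Set M)
      {a : Fin q → M | {x : M | ∃ z : Fin m → M, (∀ i, z i ∈ H) ∧
        φ.Realize (Sum.elim (Sum.elim (fun _ => x) z) a)}.Infinite} := by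
  let := hStructure L H
  refine CountSaturated.definable_of_forall_exists hsat fun a => ?_
  by_cases ha : (existsHSet H φ a).Infinite
  · obtain ⟨X, hX, haX, hXinf⟩ := exists_definableH_of_infinite φ hgeom hH hsat ha
    exact ⟨X, hX, haX, .inl hXinf⟩
  · obtain ⟨R, hR, hRfib⟩ := exists_definableH_fiber_eq_existsHSet φ H
    refine ⟨_, (definable_le_card_fiber hR ((existsHSet H φ a).ncard + 1)).compl, ?_, .inr ?_⟩
    · rintro ⟨f, hf, hfs⟩
      rw [hRfib] at hfs
      have := le_ncard_of_injective (Set.not_infinite.1 ha) hf hfs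
      omega
    · intro b hb hinf
      refine hb ?_
      simp only [Set.mem_ofPred_eq, hRfib]
      exact exists_injective_of_infinite hinf _

end HPaper
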